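/- Let Φ : ℝⁿ → ℝ and f : ℝⁿ → ℝ be convex functions, and let b₁, …, b_N ∈ ℝⁿ, z₁, …, z_N ∈ ℝ, y₁, …, y_N ∈ ℝⁿ satisfy, for every i: f(bᵢ) = Φ(bᵢ) = zᵢ and yᵢ is a subgradient of both f and Φ at bᵢ. Then for every nonempty subset S ⊆ {1, …, N} and every b ∈ conv{bᵢ : i ∈ S}, |f(b) − Φ(b)| ≤ (max_{i ∈ S} ‖yᵢ‖) · diam(conv{bᵢ : i ∈ S}). -/

import Mathlib

open scoped RealInnerProductSpace

/-! A quasiconvex `f` satisfies `f x ≤ f a` at some data point `a`, while a subgradient of `g` at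
`a` bounds `g a - g x` by its norm times the distance from `a` to `x`. As `f a = g a`, this bounds
`f x - g x`; exchanging `f` and `g`, with possibly another data point, bounds `g x - f x`. -/

section Quasiconvex

variable {𝕜 E β : Type*} [Semiring 𝕜] [PartialOrder 𝕜] [AddCommMonoid E] [Module 𝕜 E]
  [LinearOrder β] {f : E → β} {s : Set E} {x : E}

theorem exists_ge_of_mem_convexHull_of_quasiconvexOn
    (hf : QuasiconvexOn 𝕜 (convexHull 𝕜 s) f) (hx : x ∈ convexHull 𝕜 s) :
    ∃ a ∈ s, f x ≤ f a := by
  by_contra! hlt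
  have hsub : convexHull 𝕜 s ⊆ {w ∈ convexHull 𝕜 s | f w < f x} :=
    convexHull_min (fun a ha ↦ ⟨subset_convexHull 𝕜 s ha, hlt a ha⟩) (hf.convex_lt (f x))
  exact lt_irrefl _ (hsub hx).2

end Quasiconvex

section Subdifferential

variable {E : Type*} [SeminormedAddCommGroup E] [NormedSpace ℝ E] {f g : E → ℝ} {s t : Set E}
  {a x : E} {p : StrongDual ℝ E} {L : ℝ}

/-- The subdifferential of `f` at `a` relative to `t`: the continuous linear functionals satisfying
the subgradient inequality of `f` at `a` against all points of `t`. Subgradients are functionals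
rather than vectors, so that no inner product is needed; for `t = Set.univ` this is the usual
subdifferential. -/
def subdifferentialWithin (f : E → ℝ) (t : Set E) (a : E) : Set (StrongDual ℝ E) :=
  {p | ∀ x ∈ t, f a + p (x - a) ≤ f x}

theorem sub_le_norm_mul_dist_of_mem_subdifferentialWithin
    (hp : p ∈ subdifferentialWithin f t a) (hx : x ∈ t) : f a - f x ≤ ‖p‖ * dist a x :=
  calc
    f a - f x ≤ -p (x - a) := by linarith [hp x hx]
    _ = p (a - x) := by rw [← map_neg, neg_sub]
    _ ≤ ‖p‖ * ‖a - x‖ := (le_abs_self _).trans (p.le_opNorm _)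
    _ = ‖p‖ * dist a x := by rw [dist_eq_norm]

theorem sub_le_mul_diam_convexHull_of_quasiconvexOn
    (hf : QuasiconvexOn ℝ (convexHull ℝ s) f) (hs : Bornology.IsBounded s)
    (hfg : ∀ a ∈ s, f a ≤ g a)
    (hg : ∀ a ∈ s, ∃ p ∈ subdifferentialWithin g (convexHull ℝ s) a, ‖p‖ ≤ L)
    (hx : x ∈ convexHull ℝ s) : f x - g x ≤ L * Metric.diam (convexHull ℝ s) := by
  obtain ⟨a, ha, hfxa⟩ := exists_ge_of_mem_convexHull_of_quasiconvexOn hf hx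
  obtain ⟨p, hp, hpL⟩ := hg a ha
  have hdist : dist a x ≤ Metric.diam (convexHull ℝ s) :=
    Metric.dist_le_diam_of_mem (isBounded_convexHull.2 hs) (subset_convexHull ℝ s ha) hx
  calc
    f x - g x ≤ g a - g x := sub_le_sub_right (hfxa.trans (hfg a ha)) _
    _ ≤ ‖p‖ * dist a x := sub_le_norm_mul_dist_of_mem_subdifferentialWithin hp hx
    _ ≤ L * Metric.diam (convexHull ℝ s) :=
      mul_le_mul hpL hdist dist_nonneg ((norm_nonneg p).trans hpL)

theorem icnn_perfect_fit_generalization_bound_subset_general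
    (hf : QuasiconvexOn ℝ (convexHull ℝ s) f) (hg : QuasiconvexOn ℝ (convexHull ℝ s) g)
    (hs : Bornology.IsBounded s) (hfg : Set.EqOn f g s)
    (hf' : ∀ a ∈ s, ∃ p ∈ subdifferentialWithin f (convexHull ℝ s) a, ‖p‖ ≤ L)
    (hg' : ∀ a ∈ s, ∃ p ∈ subdifferentialWithin g (convexHull ℝ s) a, ‖p‖ ≤ L)
    (hx : x ∈ convexHull ℝ s) : |f x - g x| ≤ L * Metric.diam (convexHull ℝ s) :=
  abs_sub_le_iff.2
    ⟨sub_le_mul_diam_convexHull_of_quasiconvexOn hf hs (fun _ ha ↦ (hfg ha).le) hg' hx,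
      sub_le_mul_diam_convexHull_of_quasiconvexOn hg hs (fun _ ha ↦ (hfg ha).ge) hf' hx⟩

end Subdifferential

theorem exists_mem_subdifferentialWithin_norm_le_sup' {E ι : Type*} [SeminormedAddCommGroup E]
    [InnerProductSpace ℝ E] {f : E → ℝ} {t : Set E} {b y : ι → E} {S : Finset ι}
    (hS : S.Nonempty) (hy : ∀ i ∈ S, ∀ x ∈ t, f (b i) + ⟪y i, x - b i⟫ ≤ f x) :
    ∀ a ∈ b '' ↑S, ∃ p ∈ subdifferentialWithin f t a, ‖p‖ ≤ S.sup' hS fun i ↦ ‖y i‖ := by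
  rintro _ ⟨i, hi, rfl⟩
  exact ⟨innerSL ℝ (y i), hy i hi,
    (innerSL_apply_norm (𝕜 := ℝ) (y i)).trans_le (Finset.le_sup' (fun i ↦ ‖y i‖) hi)⟩

/-- Remark after Theorem 2 of the paper: the perfect-fit generalization bound applies
to any nonempty subset `S` of the data points, yielding tighter guarantees over
smaller domains. -/
theorem icnn_perfect_fit_generalization_bound_subset
    {n N : ℕ}
    (Φ f : EuclideanSpace ℝ (Fin n) → ℝ)
    (hΦ : ConvexOn ℝ Set.univ Φ) (hf : ConvexOn ℝ Set.univ f)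
    (b : Fin N → EuclideanSpace ℝ (Fin n))
    (z : Fin N → ℝ)
    (y : Fin N → EuclideanSpace ℝ (Fin n))
    (hfz : ∀ i, f (b i) = z i) (hΦz : ∀ i, Φ (b i) = z i)
    (hyf : ∀ i, ∀ b' : EuclideanSpace ℝ (Fin n), f (b i) + ⟪y i, b' - b i⟫ ≤ f b')
    (hyΦ : ∀ i, ∀ b' : EuclideanSpace ℝ (Fin n), Φ (b i) + ⟪y i, b' - b i⟫ ≤ Φ b') :
    ∀ S : Finset (Fin N), ∀ hS : S.Nonempty,
      ∀ x ∈ convexHull ℝ (b '' ↑S),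
        |f x - Φ x| ≤ (S.sup' hS fun i => ‖y i‖) * Metric.diam (convexHull ℝ (b '' ↑S)) := by
  intro S hS x hx
  have hhull : Convex ℝ (convexHull ℝ (b '' ↑S)) := convex_convexHull ℝ _
  exact icnn_perfect_fit_generalization_bound_subset_general
    (hf.subset (Set.subset_univ _) hhull).quasiconvexOn
    (hΦ.subset (Set.subset_univ _) hhull).quasiconvexOn
    (S.finite_toSet.image b).isBounded
    (Set.forall_mem_image.2 fun i _ ↦ (hfz i).trans (hΦz i).symm)
    (exists_mem_subdifferentialWithin_norm_le_sup' hS fun i _ x _ ↦ hyf i x)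
    (exists_mem_subdifferentialWithin_norm_le_sup' hS fun i _ x _ ↦ hyΦ i x) hx
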